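/- arXiv:2504.15579 — 6 statements merged into one kernel-verified Lean document; each statement's English description precedes it below -/
import Mathlib

section
/- Let C be an abelian category and let F be an additive subfunctor of Ext^1 (i.e., F(C,A) is a subgroup of Ext^1(C,A) for all A, C, stable under the induced actions of morphisms in both variables). If F is closed on the right (for every short exact sequence 0 → A → B → C → 0 whose extension class lies in F(C,A) and every object X, the sequence F(X,A) → F(X,B) → F(X,C) of abelian groups is exact), then F is closed on the left (for every such sequence and every X, the sequence F(C,X) → F(B,X) → F(A,X) is exact). -/
open CategoryTheory CategoryTheory.Limits CategoryTheory.Abelian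

universe w v u

variable {C : Type u} [Category.{v} C] [Abelian C] [HasExt.{w} C]

/-- An additive subfunctor of `Ext¹`, given by a set of extension classes in each
`Ext Z A 1`, which is an additive subgroup stable under pushout (composition with
`Ext.mk₀ a` on the right) and pullback (composition with `Ext.mk₀ c` on the left). -/
structure IsAddSubfunctor (F : ∀ Z A : C, Set (Ext Z A 1)) : Prop where
  zero_mem : ∀ Z A : C, (0 : Ext Z A 1) ∈ F Z A
  add_mem : ∀ (Z A : C), ∀ δ₁ ∈ F Z A, ∀ δ₂ ∈ F Z A, δ₁ + δ₂ ∈ F Z A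
  neg_mem : ∀ (Z A : C), ∀ δ ∈ F Z A, -δ ∈ F Z A
  push : ∀ (Z A A' : C) (a : A ⟶ A'), ∀ δ ∈ F Z A, δ.comp (Ext.mk₀ a) (add_zero 1) ∈ F Z A'
  pull : ∀ (Z Z' A : C) (c : Z' ⟶ Z), ∀ δ ∈ F Z A, (Ext.mk₀ c).comp δ (zero_add 1) ∈ F Z' A

/-- `f` is an `F`-inflation if it is the mono of a short exact sequence whose
extension class lies in `F`. -/
def IsFInflation (F : ∀ Z A : C, Set (Ext Z A 1)) {A B : C} (f : A ⟶ B) : Prop :=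
  ∃ (Z : C) (g : B ⟶ Z) (w : f ≫ g = 0) (hS : (ShortComplex.mk f g w).ShortExact),
    hS.extClass ∈ F Z A

/-- `g` is an `F`-deflation if it is the epi of a short exact sequence whose
extension class lies in `F`. -/
def IsFDeflation (F : ∀ Z A : C, Set (Ext Z A 1)) {B Z : C} (g : B ⟶ Z) : Prop :=
  ∃ (A : C) (f : A ⟶ B) (w : f ≫ g = 0) (hS : (ShortComplex.mk f g w).ShortExact),
    hS.extClass ∈ F Z A

open CategoryTheory.Pretriangulated DerivedCategory in
/-- Every class in `Ext¹` is the class of a short exact sequence. -/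
lemma exists_shortExact_extClass_eq {Z A : C} (δ : Ext Z A 1) :
    ∃ (E : C) (i : A ⟶ E) (p : E ⟶ Z) (w : i ≫ p = 0)
      (hS : (ShortComplex.mk i p w).ShortExact), hS.extClass = δ := by
  let := HasDerivedCategory.standard C
  let d : (singleFunctor C 0).obj Z ⟶ ((singleFunctor C 0).obj A)⟦(1 : ℤ)⟧ := δ.hom
  obtain ⟨Y, f, g, hT⟩ := distinguished_cocone_triangle₂ d
  have hGE : Y.IsGE 0 := TStructure.t.isGE₂ _ hT 0
    (inferInstanceAs (((singleFunctor C 0).obj A).IsGE 0))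
    (inferInstanceAs (((singleFunctor C 0).obj Z).IsGE 0))
  have hLE : Y.IsLE 0 := TStructure.t.isLE₂ _ hT 0
    (inferInstanceAs (((singleFunctor C 0).obj A).IsLE 0))
    (inferInstanceAs (((singleFunctor C 0).obj Z).IsLE 0))
  obtain ⟨E, ⟨e⟩⟩ := exists_iso_singleFunctor_obj_of_isGE_of_isLE Y 0
  obtain ⟨i, hi⟩ := (singleFunctor C 0).map_surjective (f ≫ e.hom)
  obtain ⟨p, hp⟩ := (singleFunctor C 0).map_surjective (e.inv ≫ g)
  have hT' : Triangle.mk ((singleFunctor C 0).map i) ((singleFunctor C 0).map p) d ∈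
      distTriang (DerivedCategory C) := by
    refine isomorphic_distinguished _ hT _ ?_
    have a1 : (singleFunctor C 0).map i ≫ e.inv = 𝟙 _ ≫ f := by simp [hi]
    have a2 : (singleFunctor C 0).map p ≫ 𝟙 _ = e.inv ≫ g := by simp [hp]
    have a3 : d ≫ (𝟙 ((singleFunctor C 0).obj A))⟦(1 : ℤ)⟧' = 𝟙 _ ≫ d := by simp
    exact Triangle.isoMk _ _ (Iso.refl _) e.symm (Iso.refl _) a1 a2 a3
  have w : i ≫ p = 0 := (singleFunctor C 0).map_injective (by
    rw [Functor.map_comp, Functor.map_zero]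
    exact comp_distTriang_mor_zero₁₂ _ hT')
  have hex := HomologySequence.exact₂ _ hT' 0
  have hmono : Mono ((homologyFunctor C 0).map ((singleFunctor C 0).map i)) :=
    (HomologySequence.mono_homologyMap_mor₁_iff _ hT' (-1) 0 (by lia)).2
      ((isZero_of_isGE ((singleFunctor C 0).obj Z) 0 (-1) (by lia)).eq_of_src _ _)
  have hepi : Epi ((homologyFunctor C 0).map ((singleFunctor C 0).map p)) :=
    (HomologySequence.epi_homologyMap_mor₂_iff _ hT' 0 1 (by lia)).2
      ((isZero_of_isLE ((singleFunctor C 0).obj A) 0 1 (by lia)).eq_of_tgt _ _)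
  have hS : (ShortComplex.mk i p w).ShortExact := by
    have h1 : ((ShortComplex.mk i p w).map
        (singleFunctor C 0 ⋙ homologyFunctor C 0)).ShortExact :=
      { exact := hex
        mono_f := hmono
        epi_g := hepi }
    exact ShortComplex.shortExact_of_iso
      ((ShortComplex.mk i p w).mapNatIso (singleFunctorCompHomologyFunctorIso C 0)) h1
  refine ⟨E, i, p, w, hS, ?_⟩
  ext
  rw [hS.extClass_hom]
  obtain ⟨c, hc₁, hc₂⟩ := complete_distinguished_triangle_morphism _ _
    hS.singleTriangle_distinguished hT' (𝟙 _) (𝟙 _)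
    (by exact (Category.comp_id _).trans (Category.id_comp _).symm)
  obtain ⟨cz, rfl⟩ := (singleFunctor C 0).map_surjective c
  have : Epi p := hS.epi_g
  have hcz : cz = 𝟙 Z := by
    rw [← cancel_epi p]
    apply (singleFunctor C 0).map_injective
    rw [Functor.map_comp, Category.comp_id]
    exact hc₁.trans (Category.id_comp _)
  subst hcz
  have hc₃ : hS.singleδ ≫ (𝟙 ((singleFunctor C 0).obj A))⟦(1 : ℤ)⟧' =
      (singleFunctor C 0).map (𝟙 Z) ≫ d := hc₂
  rw [CategoryTheory.Functor.map_id, CategoryTheory.Functor.map_id, Category.comp_id,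
    Category.id_comp] at hc₃
  exact hc₃

/-- If an additive subfunctor `F` of `Ext¹` is closed on the right, then it is
closed on the left. -/
theorem closed_on_right_implies_closed_on_left
    (F : ∀ Z A : C, Set (Ext Z A 1)) (hF : IsAddSubfunctor F)
    (hright : ∀ (S : ShortComplex C) (hS : S.ShortExact),
      hS.extClass ∈ F S.X₃ S.X₁ →
      ∀ (X : C) (δ : Ext X S.X₂ 1), δ ∈ F X S.X₂ →
        (δ.comp (Ext.mk₀ S.g) (add_zero 1) = 0 ↔
          ∃ μ ∈ F X S.X₁, μ.comp (Ext.mk₀ S.f) (add_zero 1) = δ)) :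
    ∀ (S : ShortComplex C) (hS : S.ShortExact),
      hS.extClass ∈ F S.X₃ S.X₁ →
      ∀ (X : C) (δ : Ext S.X₂ X 1), δ ∈ F S.X₂ X →
        ((Ext.mk₀ S.f).comp δ (zero_add 1) = 0 ↔
          ∃ μ ∈ F S.X₃ X, (Ext.mk₀ S.g).comp μ (zero_add 1) = δ) := by
  intro S hS hSF X δ hδ
  constructor
  · intro h0
    obtain ⟨μ, hμ⟩ := Ext.contravariant_sequence_exact₂ hS X δ h0
    obtain ⟨E, i, p, w, hT, rfl⟩ := exists_shortExact_extClass_eq δ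
    refine ⟨μ, ?_, hμ⟩
    -- the pushout of `μ` along `i` is a pushout of the class of `S`
    have h1 : (Ext.mk₀ S.g).comp (μ.comp (Ext.mk₀ i) (add_zero 1)) (zero_add 1) = 0 := by
      rw [← Ext.comp_assoc_of_third_deg_zero, hμ]
      exact hT.extClass_comp
    obtain ⟨x, hx⟩ := Ext.contravariant_sequence_exact₃ hS E _ h1 (add_zero 1)
    obtain ⟨k, rfl⟩ := Ext.mk₀_bijective _ _ |>.2 x
    have h2 : μ.comp (Ext.mk₀ i) (add_zero 1) ∈ F S.X₃ E := by
      rw [← hx]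
      exact hF.push _ _ _ k _ hSF
    have h3 : (μ.comp (Ext.mk₀ i) (add_zero 1)).comp (Ext.mk₀ p) (add_zero 1) = 0 := by
      rw [Ext.comp_assoc_of_third_deg_zero, Ext.mk₀_comp_mk₀, w, Ext.mk₀_zero, Ext.comp_zero]
    obtain ⟨ν, hνF, hν⟩ := (hright _ hT hδ S.X₃ _ h2).1 h3
    have h4 : (μ + -ν).comp (Ext.mk₀ i) (add_zero 1) = 0 := by
      rw [Ext.add_comp, Ext.neg_comp]
      exact (congrArg (fun t => _ + -t) hν).trans (add_neg_cancel _)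
    obtain ⟨y, hy⟩ := Ext.covariant_sequence_exact₁ _ hT (μ + -ν) h4 (zero_add 1)
    obtain ⟨l, rfl⟩ := Ext.mk₀_bijective _ _ |>.2 y
    have h5 : μ + -ν ∈ F S.X₃ X := by
      rw [← hy]
      exact hF.pull _ _ _ l _ hδ
    have h6 := hF.add_mem _ _ _ h5 _ hνF
    rwa [neg_add_cancel_right] at h6
  · rintro ⟨μ, -, rfl⟩
    rw [Ext.mk₀_comp_mk₀_assoc, S.zero, Ext.mk₀_zero, Ext.zero_comp]
end

section
/- Let C be an abelian category and F an additive subfunctor of Ext^1. Then the class of F-inflations (monomorphisms arising as the left map of a short exact sequence whose class lies in F) is closed under composition if and only if the class of F-deflations (epimorphisms arising as the right map of such a sequence) is closed under composition. -/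
open CategoryTheory CategoryTheory.Limits CategoryTheory.Abelian

universe w v u

variable {C : Type u} [Category.{v} C] [Abelian C] [HasExt.{w} C]

/-- The class of `F`-inflations is closed under composition. -/
def InflationsClosed (F : ∀ Z A : C, Set (Ext Z A 1)) : Prop :=
  ∀ ⦃A B D : C⦄ (f : A ⟶ B) (g : B ⟶ D),
    IsFInflation F f → IsFInflation F g → IsFInflation F (f ≫ g)

/-- The class of `F`-deflations is closed under composition. -/
def DeflationsClosed (F : ∀ Z A : C, Set (Ext Z A 1)) : Prop :=
  ∀ ⦃E B Z : C⦄ (e : E ⟶ B) (g : B ⟶ Z),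
    IsFDeflation F e → IsFDeflation F g → IsFDeflation F (e ≫ g)

/-- Short exactness from the kernel property. -/
lemma shortExact_of_lift {X Y Z : C} (f : X ⟶ Y) (g : Y ⟶ Z) (w : f ≫ g = 0) [Mono f] [Epi g]
    (h : ∀ {T : C} (k : T ⟶ Y), k ≫ g = 0 → ∃ l : T ⟶ X, l ≫ f = k) :
    (ShortComplex.mk f g w).ShortExact :=
  ShortComplex.ShortExact.mk' (ShortComplex.exact_of_f_is_kernel _
    (KernelFork.IsLimit.ofι' f w (fun k hk => ⟨(h k hk).choose, (h k hk).choose_spec⟩)))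
    (by assumption) (by assumption)

/-- Short exactness from the cokernel property. -/
lemma shortExact_of_desc {X Y Z : C} (f : X ⟶ Y) (g : Y ⟶ Z) (w : f ≫ g = 0) [Mono f] [Epi g]
    (h : ∀ {T : C} (k : Y ⟶ T), f ≫ k = 0 → ∃ l : Z ⟶ T, g ≫ l = k) :
    (ShortComplex.mk f g w).ShortExact :=
  ShortComplex.ShortExact.mk' (ShortComplex.exact_of_g_is_cokernel _
    (CokernelCofork.IsColimit.ofπ' g w (fun k hk => ⟨(h k hk).choose, (h k hk).choose_spec⟩)))
    (by assumption) (by assumption)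

/-- Pullback of an `F`-exact sequence is `F`-exact. -/
lemma mem_of_pull {F : ∀ Z A : C, Set (Ext Z A 1)} (hF : IsAddSubfunctor F)
    {A B B' Z Z' : C} {f : A ⟶ B} {g : B ⟶ Z} {w : f ≫ g = 0}
    {f' : A ⟶ B'} {g' : B' ⟶ Z'} {w' : f' ≫ g' = 0}
    (hS : (ShortComplex.mk f g w).ShortExact) (hS' : (ShortComplex.mk f' g' w').ShortExact)
    (b : B' ⟶ B) (c : Z' ⟶ Z) (h1 : f' ≫ b = f) (h2 : g' ≫ c = b ≫ g)
    (h : hS.extClass ∈ F Z A) : hS'.extClass ∈ F Z' A := by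
  have := ShortComplex.ShortExact.extClass_naturality hS' hS
    { τ₁ := 𝟙 A, τ₂ := b, τ₃ := c, comm₁₂ := by simp [h1], comm₂₃ := by simp [h2] }
  dsimp at this
  rw [Ext.comp_mk₀_id] at this
  rw [this]
  exact hF.pull _ _ _ _ _ h

/-- Pushout of an `F`-exact sequence is `F`-exact. -/
lemma mem_of_push {F : ∀ Z A : C, Set (Ext Z A 1)} (hF : IsAddSubfunctor F)
    {A A' B B' Z : C} {f : A ⟶ B} {g : B ⟶ Z} {w : f ≫ g = 0}
    {f' : A' ⟶ B'} {g' : B' ⟶ Z} {w' : f' ≫ g' = 0}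
    (hS : (ShortComplex.mk f g w).ShortExact) (hS' : (ShortComplex.mk f' g' w').ShortExact)
    (a : A ⟶ A') (b : B ⟶ B') (h1 : a ≫ f' = f ≫ b) (h2 : b ≫ g' = g)
    (h : hS.extClass ∈ F Z A) : hS'.extClass ∈ F Z A' := by
  have := ShortComplex.ShortExact.extClass_naturality hS hS'
    { τ₁ := a, τ₂ := b, τ₃ := 𝟙 Z, comm₁₂ := by simp [h1], comm₂₃ := by simp [h2] }
  dsimp at this
  rw [Ext.mk₀_id_comp] at this
  rw [← this]
  exact hF.push _ _ _ _ _ h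

lemma inflationsClosed_of_deflationsClosed
    (F : ∀ Z A : C, Set (Ext Z A 1)) (hF : IsAddSubfunctor F)
    (H : DeflationsClosed F) : InflationsClosed F := by
  rintro A B D f g ⟨X, p, wp, hp, mp⟩ ⟨Y, r, wr, hr, mr⟩
  have : Mono f := hp.mono_f
  have : Epi p := hp.epi_g
  have : Mono g := hr.mono_f
  have : Epi r := hr.epi_g
  let π := cokernel.π (f ≫ g)
  have wπ : f ≫ g ≫ π = 0 := by rw [← Category.assoc]; exact cokernel.condition (f ≫ g)
  have hQ : (ShortComplex.mk (f ≫ g) π (cokernel.condition _)).ShortExact :=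
    shortExact_of_desc _ _ _ (fun k hk => ⟨cokernel.desc _ k hk, by simp [π]⟩)
  obtain ⟨j, hj : p ≫ j = g ≫ π⟩ := hp.exact.desc' (g ≫ π) wπ
  obtain ⟨s, hs : π ≫ s = r⟩ := hQ.exact.desc' r (by simp [wr])
  have hjs : j ≫ s = 0 := by
    rw [← cancel_epi p, reassoc_of% hj, hs, wr, comp_zero]
  have : Mono (biprod.lift g (-p)) := by
    have : Mono (biprod.lift g (-p) ≫ biprod.fst) := by simpa
    exact mono_of_mono _ biprod.fst
  have : Epi (biprod.desc π j) := by
    have : Epi (biprod.inl ≫ biprod.desc π j) := by simp only [biprod.inl_desc]; infer_instance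
    exact epi_of_epi biprod.inl _
  have h1 : (ShortComplex.mk (biprod.lift g (-p)) (biprod.desc π j) (by simp [hj])).ShortExact := by
    refine shortExact_of_desc _ _ _ (fun {T} k hk => ?_)
    have hk' : g ≫ biprod.inl ≫ k = p ≫ biprod.inr ≫ k := by
      rw [biprod.lift_eq] at hk
      simpa [add_neg_eq_zero] using hk
    obtain ⟨m, hm : π ≫ m = _⟩ := hQ.exact.desc' (biprod.inl ≫ k) (by
      dsimp
      rw [Category.assoc, hk', reassoc_of% wp, zero_comp])
    refine ⟨m, ?_⟩
    ext
    · simpa using hm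
    · rw [← cancel_epi p]
      simp [reassoc_of% hj, hm, hk']
  have m1 : IsFDeflation F (biprod.desc π j) :=
    ⟨_, _, _, h1, mem_of_pull hF hr h1 biprod.fst s (by simp) (by ext <;> simp [hs, hjs]) mr⟩
  have h2 : (ShortComplex.mk (f ≫ (biprod.inr : B ⟶ D ⊞ B)) (biprod.map (𝟙 D) p)
      (by simp [reassoc_of% wp])).ShortExact := by
    refine shortExact_of_lift _ _ _ (fun {T} k hk => ?_)
    have hk1 : k ≫ biprod.fst = 0 := by simpa using hk =≫ biprod.fst
    have hk2 : (k ≫ biprod.snd) ≫ p = 0 := by simpa using hk =≫ biprod.snd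
    obtain ⟨l, hl : l ≫ f = _⟩ := hp.exact.lift' (k ≫ biprod.snd) hk2
    refine ⟨l, ?_⟩
    ext
    · simp [hk1]
    · simp [hl]
  have m2 : IsFDeflation F (biprod.map (𝟙 D) p) :=
    ⟨_, _, _, h2, mem_of_pull hF hp h2 biprod.snd biprod.snd (by simp) (by simp) mp⟩
  obtain ⟨K, k, wk, hk, mk⟩ := H _ _ m2 m1
  have e : biprod.desc (𝟙 D) g ≫ π = biprod.map (𝟙 D) p ≫ biprod.desc π j := by
    ext <;> simp [hj]
  obtain ⟨a, ha : a ≫ f ≫ g = _⟩ := hQ.exact.lift' (k ≫ biprod.desc (𝟙 D) g) (by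
    dsimp
    rw [Category.assoc, e, wk])
  exact ⟨_, _, _, hQ, mem_of_push hF hk hQ a (biprod.desc (𝟙 D) g) ha e mk⟩

lemma deflationsClosed_of_inflationsClosed
    (F : ∀ Z A : C, Set (Ext Z A 1)) (hF : IsAddSubfunctor F)
    (H : InflationsClosed F) : DeflationsClosed F := by
  rintro E B Z e g ⟨K, i, wi, hi, mi⟩ ⟨A, a, wa, ha, ma⟩
  have : Mono i := hi.mono_f
  have : Epi e := hi.epi_g
  have : Mono a := ha.mono_f
  have : Epi g := ha.epi_g
  let ι := kernel.ι (e ≫ g)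
  have wι : (ι ≫ e) ≫ g = 0 := by rw [Category.assoc]; exact kernel.condition (e ≫ g)
  have hN : (ShortComplex.mk ι (e ≫ g) (kernel.condition _)).ShortExact :=
    shortExact_of_lift _ _ _ (fun k hk => ⟨kernel.lift _ k hk, by simp [ι]⟩)
  obtain ⟨n, hn : n ≫ a = ι ≫ e⟩ := ha.exact.lift' (ι ≫ e) wι
  obtain ⟨t, ht : t ≫ ι = i⟩ := hN.exact.lift' i (by simp [reassoc_of% wi])
  have htn : t ≫ n = 0 := by
    rw [← cancel_mono a, Category.assoc, hn, reassoc_of% ht, wi, zero_comp]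
  have : Mono (biprod.lift ι n) := by
    have : Mono (biprod.lift ι n ≫ biprod.fst) := by simp only [biprod.lift_fst]; infer_instance
    exact mono_of_mono _ biprod.fst
  have : Epi (biprod.desc e (-a)) := by
    have : Epi (biprod.inl ≫ biprod.desc e (-a)) := by simpa
    exact epi_of_epi biprod.inl _
  have h1 : (ShortComplex.mk (biprod.lift ι n) (biprod.desc e (-a)) (by simp [hn])).ShortExact := by
    refine shortExact_of_lift _ _ _ (fun {T} k hk => ?_)
    have hk' : (k ≫ biprod.fst) ≫ e = (k ≫ biprod.snd) ≫ a := by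
      rw [biprod.desc_eq] at hk
      simpa [add_neg_eq_zero] using hk
    obtain ⟨m, hm : m ≫ ι = _⟩ := hN.exact.lift' (k ≫ biprod.fst) (by
      dsimp
      rw [← Category.assoc, hk', Category.assoc, wa, comp_zero])
    refine ⟨m, ?_⟩
    ext
    · simpa using hm
    · rw [← cancel_mono a]
      simp only [Category.assoc, biprod.lift_snd, hn, reassoc_of% hm]
      simpa using hk'
  have m1 : IsFInflation F (biprod.lift ι n) :=
    ⟨_, _, _, h1, mem_of_push hF hi h1 t biprod.inl (by ext <;> simp [ht, htn]) (by simp) mi⟩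
  have h2 : (ShortComplex.mk (biprod.map (𝟙 E) a) ((biprod.snd : E ⊞ B ⟶ B) ≫ g)
      (by simp [wa])).ShortExact := by
    refine shortExact_of_desc _ _ _ (fun {T} k hk => ?_)
    have hk1 : biprod.inl ≫ k = 0 := by simpa using biprod.inl ≫= hk
    have hk2 : a ≫ biprod.inr ≫ k = 0 := by simpa using biprod.inr ≫= hk
    obtain ⟨l, hl : g ≫ l = _⟩ := ha.exact.desc' (biprod.inr ≫ k) hk2
    refine ⟨l, ?_⟩
    ext
    · simp [hk1]
    · simp [hl]
  have m2 : IsFInflation F (biprod.map (𝟙 E) a) :=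
    ⟨_, _, _, h2, mem_of_push hF ha h2 biprod.inr biprod.inr (by simp) (by simp) ma⟩
  obtain ⟨W, k, wk, hk, mk⟩ := H _ _ m1 m2
  have e' : ι ≫ biprod.lift (𝟙 E) e = biprod.lift ι n ≫ biprod.map (𝟙 E) a := by
    ext <;> simp [hn]
  obtain ⟨c, hc : (e ≫ g) ≫ c = _⟩ := hN.exact.desc' (biprod.lift (𝟙 E) e ≫ k) (by
    dsimp
    rw [← Category.assoc, e', wk])
  exact ⟨_, _, _, hN, mem_of_pull hF hk hN (biprod.lift (𝟙 E) e) c e' hc mk⟩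

/-- For an additive subfunctor `F` of `Ext¹`, the `F`-inflations are closed
under composition if and only if the `F`-deflations are. -/
theorem inflationsClosed_iff_deflationsClosed
    (F : ∀ Z A : C, Set (Ext Z A 1)) (hF : IsAddSubfunctor F) :
    InflationsClosed F ↔ DeflationsClosed F := by
  exact ⟨deflationsClosed_of_inflationsClosed F hF, inflationsClosed_of_deflationsClosed F hF⟩
end

section
/- Let C be an abelian category and F an additive subfunctor of Ext^1. Suppose δ ∈ F(G, H) is the class of a short exact sequence 0 → H → I → G → 0, f: G' → G is an F-deflation, and the pullback class δ·f lies in F(G', H). Then (without further hypotheses this is automatic since F is a subfunctor) δ ∈ F(G,H). More substantively: if ε ∈ Ext^1(G,H) satisfies that ε·f ∈ F(G',H) for some F-deflation f: G' ↠ G, and F is closed, then ε ∈ F(G,H). -/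
open CategoryTheory CategoryTheory.Limits CategoryTheory.Abelian

universe w v u

variable {C : Type u} [Category.{v} C] [Abelian C] [HasExt.{w} C]

open DerivedCategory Pretriangulated in
/-- Every class in `Ext G H 1` is the class of a short exact sequence. -/
theorem exists_shortExact_extClass {G H : C} (ε : Ext G H 1) :
    ∃ (E : C) (i : H ⟶ E) (p : E ⟶ G) (w : i ≫ p = 0)
      (hS : (ShortComplex.mk i p w).ShortExact), hS.extClass = ε := by
  let := HasDerivedCategory.standard C
  let e : (singleFunctor C 0).obj G ⟶ ((singleFunctor C 0).obj H)⟦(1 : ℤ)⟧ := ε.hom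
  obtain ⟨Y, a, b, hT⟩ := distinguished_cocone_triangle₂ e
  have hLE : Y.IsLE 0 := TStructure.t.isLE₂ _ hT 0
    (inferInstanceAs (((singleFunctor C 0).obj H).IsLE 0))
    (inferInstanceAs (((singleFunctor C 0).obj G).IsLE 0))
  have hGE : Y.IsGE 0 := TStructure.t.isGE₂ _ hT 0
    (inferInstanceAs (((singleFunctor C 0).obj H).IsGE 0))
    (inferInstanceAs (((singleFunctor C 0).obj G).IsGE 0))
  obtain ⟨E, ⟨φ⟩⟩ := exists_iso_singleFunctor_obj_of_isGE_of_isLE Y 0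
  obtain ⟨i, hi⟩ := (singleFunctor C 0).map_surjective (a ≫ φ.hom)
  obtain ⟨p, hp⟩ := (singleFunctor C 0).map_surjective (φ.inv ≫ b)
  have hT' : Triangle.mk ((singleFunctor C 0).map i) ((singleFunctor C 0).map p) e ∈
      distTriang (DerivedCategory C) := by
    refine isomorphic_distinguished _ hT _
      (Triangle.isoMk _ _ (Iso.refl _) φ.symm (Iso.refl _) ?_ ?_ ?_)
    · change (singleFunctor C 0).map i ≫ φ.inv = 𝟙 _ ≫ a
      rw [hi, Category.assoc, φ.hom_inv_id, Category.comp_id, Category.id_comp]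
    · change (singleFunctor C 0).map p ≫ 𝟙 _ = φ.inv ≫ b
      rw [hp, Category.comp_id]
    · change e ≫ (𝟙 ((singleFunctor C 0).obj H))⟦(1 : ℤ)⟧' = 𝟙 _ ≫ e
      rw [CategoryTheory.Functor.map_id, Category.comp_id, Category.id_comp]
  have w : i ≫ p = 0 := by
    apply (singleFunctor C 0).map_injective
    rw [Functor.map_comp, Functor.map_zero]
    exact comp_distTriang_mor_zero₁₂ _ hT'
  have hepi : Epi p := by
    rw [Preadditive.epi_iff_cancel_zero]
    intro Z h hh
    apply (singleFunctor C 0).map_injective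
    obtain ⟨g, hg⟩ := Triangle.yoneda_exact₃ _ hT' ((singleFunctor C 0).map h)
      (by
        change (singleFunctor C 0).map p ≫ (singleFunctor C 0).map h = 0
        rw [← Functor.map_comp, hh, Functor.map_zero])
    have h0 : g = 0 := TStructure.t.zero_of_isLE_of_isGE g (-1) 0 (by lia)
      (TStructure.t.isLE_shift ((singleFunctor C 0).obj H) 0 1 (-1) (by lia)) inferInstance
    rw [Functor.map_zero]
    refine hg.trans ?_
    rw [h0]
    exact comp_zero
  have hmono : Mono i := by
    rw [Preadditive.mono_iff_cancel_zero]
    intro Z h hh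
    apply (singleFunctor C 0).map_injective
    apply (shiftFunctor (DerivedCategory C) (1 : ℤ)).map_injective
    obtain ⟨g, hg⟩ := Triangle.coyoneda_exact₁ _ hT' (((singleFunctor C 0).map h)⟦(1 : ℤ)⟧')
      (by
        change ((singleFunctor C 0).map h)⟦(1 : ℤ)⟧' ≫ ((singleFunctor C 0).map i)⟦(1 : ℤ)⟧' = 0
        rw [← Functor.map_comp, ← Functor.map_comp, hh, Functor.map_zero, Functor.map_zero])
    have h0 : g = 0 := TStructure.t.zero_of_isLE_of_isGE g (-1) 0 (by lia)
      (TStructure.t.isLE_shift ((singleFunctor C 0).obj Z) 0 1 (-1) (by lia))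
      (inferInstanceAs (((singleFunctor C 0).obj G).IsGE 0))
    rw [Functor.map_zero, Functor.map_zero]
    refine hg.trans ?_
    rw [h0]
    exact zero_comp
  have hker : ∀ {Z : C} (k : Z ⟶ E), k ≫ p = 0 → ∃ l : Z ⟶ H, l ≫ i = k := by
    intro Z k hk
    obtain ⟨g, hg⟩ := Triangle.coyoneda_exact₂ _ hT' ((singleFunctor C 0).map k)
      (by
        change (singleFunctor C 0).map k ≫ (singleFunctor C 0).map p = 0
        rw [← Functor.map_comp, hk, Functor.map_zero])
    obtain ⟨l, rfl⟩ := (singleFunctor C 0).map_surjective g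
    refine ⟨l, (singleFunctor C 0).map_injective ?_⟩
    rw [Functor.map_comp]
    exact hg.symm
  have hS : (ShortComplex.mk i p w).ShortExact :=
    { exact := ShortComplex.exact_of_f_is_kernel _
        (KernelFork.IsLimit.ofι' _ _ (fun k hk =>
          ⟨(hker k hk).choose, (hker k hk).choose_spec⟩))
      mono_f := hmono
      epi_g := hepi }
  refine ⟨E, i, p, w, hS, ?_⟩
  ext
  rw [hS.extClass_hom]
  obtain ⟨c, hc₁, hc₂⟩ := complete_distinguished_triangle_morphism _ _
    hS.singleTriangle_distinguished hT' (𝟙 _) (𝟙 _)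
    (by
      change (singleFunctor C 0).map i ≫ 𝟙 _ = 𝟙 _ ≫ (singleFunctor C 0).map i
      simp)
  obtain ⟨c, rfl⟩ := (singleFunctor C 0).map_surjective c
  have hc : c = 𝟙 G := by
    rw [← cancel_epi p]
    apply (singleFunctor C 0).map_injective
    rw [Functor.map_comp, Category.comp_id]
    exact hc₁.trans (Category.id_comp _)
  subst hc
  change hS.singleδ ≫ (𝟙 ((singleFunctor C 0).obj H))⟦(1 : ℤ)⟧' =
    (singleFunctor C 0).map (𝟙 G) ≫ e at hc₂
  rw [CategoryTheory.Functor.map_id, CategoryTheory.Functor.map_id, Category.id_comp, Category.comp_id] at hc₂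
  exact hc₂

/-- Saturation: if `F` is closed (deflations compose) and `f : G' ⟶ G` is an
`F`-deflation, then any `ε ∈ Ext¹(G,H)` whose pullback along `f` lies in `F`
already lies in `F`. -/
theorem closed_implies_saturated
    (F : ∀ Z A : C, Set (Ext Z A 1)) (hF : IsAddSubfunctor F)
    (hclosed : DeflationsClosed F)
    {G' G H : C} (f : G' ⟶ G) (hf : IsFDeflation F f)
    (ε : Ext G H 1) (hε : (Ext.mk₀ f).comp ε (zero_add 1) ∈ F G' H) :
    ε ∈ F G H := by
  obtain ⟨P, j, q, wq, hq, hqε⟩ := exists_shortExact_extClass ((Ext.mk₀ f).comp ε (zero_add 1))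
  have hdq : IsFDeflation F q := ⟨H, j, wq, hq, by rw [hqε]; exact hε⟩
  obtain ⟨A, a, w, hS, hα⟩ := hclosed q f hdq hf
  have h0 : (Ext.mk₀ (q ≫ f)).comp ε (zero_add 1) = 0 := by
    rw [← Ext.mk₀_comp_mk₀_assoc, ← hqε]
    exact hq.comp_extClass
  obtain ⟨x, hx⟩ := Ext.contravariant_sequence_exact₃ hS H ε h0 (add_zero 1)
  obtain ⟨l, rfl⟩ := (Ext.mk₀_bijective _ _).2 x
  rw [← hx]
  exact hF.push _ _ _ l _ hα
end

section
/- Let C be an abelian category. For any class ξ of short exact sequences closed under isomorphism, define E_ξ(C,A) = {δ ∈ Ext^1(C,A) : some sequence in ξ realizes δ}. Then the assignment ξ ↦ E_ξ gives a bijection between proper classes of short exact sequences (classes containing all split sequences, closed under finite direct sums, and closed under base change and cobase change) and additive subfunctors of Ext^1. -/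
open CategoryTheory CategoryTheory.Limits CategoryTheory.Abelian

universe w v u

variable {C : Type u} [Category.{v} C] [Abelian C] [HasExt.{w} C]

/-- The classes in `Ext Z A 1` realized by some short exact sequence in `ξ`. -/
def EClass (ξ : Set (ShortComplex C)) (Z A : C) : Set (Ext Z A 1) :=
  {δ | ∃ (B : C) (f : A ⟶ B) (g : B ⟶ Z) (w : f ≫ g = 0)
      (hS : (ShortComplex.mk f g w).ShortExact),
      ShortComplex.mk f g w ∈ ξ ∧ hS.extClass = δ}

/-- A proper class of short exact sequences: closed under isomorphism, consisting
of short exact sequences, containing all split short exact sequences, closed under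
finite direct sums, and closed under base change and cobase change. -/
structure IsProperClass (ξ : Set (ShortComplex C)) : Prop where
  shortExact : ∀ S ∈ ξ, S.ShortExact
  iso_closed : ∀ S ∈ ξ, ∀ S' : ShortComplex C, Nonempty (S ≅ S') → S' ∈ ξ
  split_mem : ∀ S : ShortComplex C, Nonempty S.Splitting → S ∈ ξ
  sum_mem : ∀ S ∈ ξ, ∀ T ∈ ξ,
    ShortComplex.mk (biprod.map S.f T.f) (biprod.map S.g T.g)
      (by ext <;> simp [S.zero, T.zero]) ∈ ξ
  base_change : ∀ (Z A : C), ∀ δ ∈ EClass ξ Z A, ∀ (Z' : C) (c : Z' ⟶ Z),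
    (Ext.mk₀ c).comp δ (zero_add 1) ∈ EClass ξ Z' A
  cobase_change : ∀ (Z A : C), ∀ δ ∈ EClass ξ Z A, ∀ (A' : C) (a : A ⟶ A'),
    δ.comp (Ext.mk₀ a) (add_zero 1) ∈ EClass ξ Z A'

open Pretriangulated in
lemma exists_shortExact_of_ext {Z A : C} (δ : Ext Z A 1) :
    ∃ (B : C) (f : A ⟶ B) (g : B ⟶ Z) (w : f ≫ g = 0)
      (hS : (ShortComplex.mk f g w).ShortExact), hS.extClass = δ := by
  let := HasDerivedCategory.standard C
  let d : (DerivedCategory.singleFunctor C 0).obj Z ⟶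
    ((DerivedCategory.singleFunctor C 0).obj A)⟦(1 : ℤ)⟧ := δ.hom
  obtain ⟨X, a, b, hT⟩ := distinguished_cocone_triangle₂ d
  have hGE : X.IsGE 0 := by
    rw [DerivedCategory.isGE_iff]
    intro i hi
    exact (DerivedCategory.HomologySequence.exact₂ _ hT i).isZero_of_both_zeros
      ((DerivedCategory.isZero_of_isGE ((DerivedCategory.singleFunctor C 0).obj A) 0 i hi).eq_of_src _ _)
      ((DerivedCategory.isZero_of_isGE ((DerivedCategory.singleFunctor C 0).obj Z) 0 i hi).eq_of_tgt _ _)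
  have hLE : X.IsLE 0 := by
    rw [DerivedCategory.isLE_iff]
    intro i hi
    exact (DerivedCategory.HomologySequence.exact₂ _ hT i).isZero_of_both_zeros
      ((DerivedCategory.isZero_of_isLE ((DerivedCategory.singleFunctor C 0).obj A) 0 i hi).eq_of_src _ _)
      ((DerivedCategory.isZero_of_isLE ((DerivedCategory.singleFunctor C 0).obj Z) 0 i hi).eq_of_tgt _ _)
  obtain ⟨B, ⟨e⟩⟩ := DerivedCategory.exists_iso_singleFunctor_obj_of_isGE_of_isLE X 0
  obtain ⟨f, hf⟩ := (DerivedCategory.singleFunctor C 0).map_surjective (a ≫ e.hom)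
  obtain ⟨g, hg⟩ := (DerivedCategory.singleFunctor C 0).map_surjective (e.inv ≫ b)
  have hT' : Triangle.mk ((DerivedCategory.singleFunctor C 0).map f)
      ((DerivedCategory.singleFunctor C 0).map g) d ∈ distTriang (DerivedCategory C) := by
    refine isomorphic_distinguished _ hT _ ?_
    refine Triangle.isoMk _ _ (Iso.refl _) e.symm (Iso.refl _) ?_ ?_ ?_
    · change _ ≫ e.inv = 𝟙 _ ≫ a
      dsimp only [Triangle.mk]
      rw [hf, Category.assoc, e.hom_inv_id, Category.comp_id, Category.id_comp]
    · change (DerivedCategory.singleFunctor C 0).map g ≫ 𝟙 _ = e.inv ≫ b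
      rw [hg, Category.comp_id]
    · change d ≫ (shiftFunctor (DerivedCategory C) (1 : ℤ)).map (𝟙 _) = 𝟙 _ ≫ d
      rw [CategoryTheory.Functor.map_id, Category.comp_id, Category.id_comp]
  have w : f ≫ g = 0 := (DerivedCategory.singleFunctor C 0).map_injective (by
    rw [Functor.map_comp, Functor.map_zero]
    exact comp_distTriang_mor_zero₁₂ _ hT')
  let φ := DerivedCategory.singleFunctorCompHomologyFunctorIso C 0
  have hex : (ShortComplex.mk f g w).Exact := by
    refine ShortComplex.exact_of_iso ?_ (DerivedCategory.HomologySequence.exact₂ _ hT' 0)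
    exact ShortComplex.isoMk (φ.app A) (φ.app B) (φ.app Z)
      (φ.hom.naturality f).symm (φ.hom.naturality g).symm
  have hmono : Mono f := by
    have h1 := (DerivedCategory.HomologySequence.mono_homologyMap_mor₁_iff _ hT' (-1) 0
      (by lia)).2 ((DerivedCategory.isZero_of_isGE
        ((DerivedCategory.singleFunctor C 0).obj Z) 0 (-1) (by lia)).eq_of_src _ _)
    have h2 : f = φ.inv.app A ≫ (DerivedCategory.homologyFunctor C 0).map
      ((DerivedCategory.singleFunctor C 0).map f) ≫ φ.hom.app B :=
        (NatIso.naturality_1 φ f).symm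
    rw [h2]
    have : Mono ((DerivedCategory.homologyFunctor C 0).map
      ((DerivedCategory.singleFunctor C 0).map f)) := h1
    infer_instance
  have hepi : Epi g := by
    have h1 := (DerivedCategory.HomologySequence.epi_homologyMap_mor₂_iff _ hT' 0 1
      (by lia)).2 ((DerivedCategory.isZero_of_isLE
        ((DerivedCategory.singleFunctor C 0).obj A) 0 1 (by lia)).eq_of_tgt _ _)
    have h2 : g = φ.inv.app B ≫ (DerivedCategory.homologyFunctor C 0).map
      ((DerivedCategory.singleFunctor C 0).map g) ≫ φ.hom.app Z :=
        (NatIso.naturality_1 φ g).symm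
    rw [h2]
    have : Epi ((DerivedCategory.homologyFunctor C 0).map
      ((DerivedCategory.singleFunctor C 0).map g)) := h1
    infer_instance
  have hS : (ShortComplex.mk f g w).ShortExact := ShortComplex.ShortExact.mk' hex hmono hepi
  refine ⟨B, f, g, w, hS, ?_⟩
  obtain ⟨c, hc₁, hc₂⟩ := complete_distinguished_triangle_morphism _ _ hT'
    hS.singleTriangle_distinguished (𝟙 _) (𝟙 _)
    ((Category.comp_id _).trans (Category.id_comp _).symm)
  obtain ⟨c, rfl⟩ := (DerivedCategory.singleFunctor C 0).map_surjective c
  have hc : c = 𝟙 Z := by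
    rw [← cancel_epi g]
    apply (DerivedCategory.singleFunctor C 0).map_injective
    rw [Functor.map_comp, Category.comp_id]
    exact hc₁.trans (Category.id_comp _)
  subst hc
  ext
  rw [ShortComplex.ShortExact.extClass_hom]
  have h3 : d = hS.singleδ := by
    replace hc₂ : d ≫ (shiftFunctor (DerivedCategory C) (1 : ℤ)).map (𝟙 _) =
      (DerivedCategory.singleFunctor C 0).map (𝟙 Z) ≫ hS.singleδ := hc₂
    rw [CategoryTheory.Functor.map_id, CategoryTheory.Functor.map_id] at hc₂
    exact (Category.comp_id _).symm.trans (hc₂.trans (Category.id_comp _))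
  exact h3.symm

lemma iso_of_extClass_eq {A Z B B' : C} {f : A ⟶ B} {g : B ⟶ Z} {w : f ≫ g = 0}
    {f' : A ⟶ B'} {g' : B' ⟶ Z} {w' : f' ≫ g' = 0}
    (hS : (ShortComplex.mk f g w).ShortExact) (hS' : (ShortComplex.mk f' g' w').ShortExact)
    (h : hS'.extClass = hS.extClass) :
    Nonempty (ShortComplex.mk f' g' w' ≅ ShortComplex.mk f g w) := by
  have : Epi g' := hS'.epi_g
  obtain ⟨x, hx⟩ := Ext.contravariant_sequence_exact₁ hS' B (Ext.mk₀ f) (add_zero 1)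
    (by rw [h]; exact hS.extClass_comp)
  obtain ⟨k, rfl⟩ := Ext.mk₀_bijective _ _ |>.2 x
  have hk : f' ≫ k = f := (Ext.mk₀_bijective _ _).1 (by rw [← hx]; simp)
  obtain ⟨c, hc⟩ := CokernelCofork.IsColimit.desc' hS'.gIsCokernel (k ≫ g)
    (by rw [← Category.assoc]; exact (congrArg (· ≫ g) hk).trans w)
  change Z ⟶ Z at c
  replace hc : g' ≫ c = k ≫ g := hc
  let m : ShortComplex.mk f' g' w' ⟶ ShortComplex.mk f g w :=
    { τ₁ := 𝟙 A, τ₂ := k, τ₃ := c, comm₁₂ := by simp [hk], comm₂₃ := by simp [hc] }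
  have nat := ShortComplex.ShortExact.extClass_naturality hS' hS m
  have nat' : hS.extClass = (Ext.mk₀ c).comp hS.extClass (zero_add 1) := by
    have h4 : hS'.extClass.comp (Ext.mk₀ (𝟙 A)) (add_zero 1) =
      (Ext.mk₀ c).comp hS.extClass (zero_add 1) := nat
    rw [← h4, Ext.comp_mk₀_id, h]
  obtain ⟨y, hy⟩ := Ext.covariant_sequence_exact₃ Z hS (Ext.mk₀ (c - 𝟙 Z)) (zero_add 1) (by
    rw [sub_eq_add_neg, Ext.mk₀_add, Ext.mk₀_neg, Ext.add_comp, Ext.neg_comp]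
    have h5 : (Ext.mk₀ (𝟙 Z)).comp hS.extClass (zero_add 1) = hS.extClass := Ext.mk₀_id_comp _
    exact (congrArg₂ (fun p q => p + -q) nat'.symm h5).trans (add_neg_cancel _))
  obtain ⟨s, rfl⟩ := Ext.mk₀_bijective _ _ |>.2 y
  have hs : s ≫ g = c - 𝟙 Z := (Ext.mk₀_bijective _ _).1 (by rw [← hy]; simp)
  let m' : ShortComplex.mk f' g' w' ⟶ ShortComplex.mk f g w :=
    { τ₁ := 𝟙 A, τ₂ := k - g' ≫ s, τ₃ := 𝟙 Z
      comm₁₂ := by simp [hk, reassoc_of% w']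
      comm₂₃ := by simp [hs, hc] }
  have i1 : IsIso m'.τ₁ := inferInstanceAs (IsIso (𝟙 A))
  have i3 : IsIso m'.τ₃ := inferInstanceAs (IsIso (𝟙 Z))
  have i2 : IsIso m'.τ₂ := ShortComplex.isIso₂_of_shortExact_of_isIso₁₃ m' hS' hS
  have : IsIso m' := ShortComplex.isIso_of_isIso m'
  exact ⟨asIso m'⟩

/-- The direct sum of two short complexes. -/
noncomputable abbrev sumSC (S T : ShortComplex C) : ShortComplex C :=
  ShortComplex.mk (biprod.map S.f T.f) (biprod.map S.g T.g) (by ext <;> simp [S.zero, T.zero])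

lemma sumSC_shortExact {S T : ShortComplex C} (hS : S.ShortExact) (hT : T.ShortExact) :
    (sumSC S T).ShortExact := by
  have := hS.mono_f
  have := hT.mono_f
  have := hS.epi_g
  have := hT.epi_g
  have m : Mono (biprod.map S.f T.f) := by
    rw [Preadditive.mono_iff_cancel_zero]
    intro P g hg
    have h1 : g ≫ biprod.fst = 0 := by
      rw [← cancel_mono S.f]; simpa using congrArg (· ≫ biprod.fst) hg
    have h2 : g ≫ biprod.snd = 0 := by
      rw [← cancel_mono T.f]; simpa using congrArg (· ≫ biprod.snd) hg
    ext <;> simp [h1, h2]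
  have e : Epi (biprod.map S.g T.g) := by
    rw [Preadditive.epi_iff_cancel_zero]
    intro P g hg
    have h1 : biprod.inl ≫ g = 0 := by
      rw [← cancel_epi S.g]; simpa using congrArg (biprod.inl ≫ ·) hg
    have h2 : biprod.inr ≫ g = 0 := by
      rw [← cancel_epi T.g]; simpa using congrArg (biprod.inr ≫ ·) hg
    ext <;> simp [h1, h2]
  refine ShortComplex.ShortExact.mk' ?_ m e
  apply ShortComplex.exact_of_f_is_kernel
  refine KernelFork.IsLimit.ofι' _ _ (fun {W} k hk => ?_)
  have h1 : (k ≫ biprod.fst) ≫ S.g = 0 := by simpa using congrArg (· ≫ biprod.fst) hk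
  have h2 : (k ≫ biprod.snd) ≫ T.g = 0 := by simpa using congrArg (· ≫ biprod.snd) hk
  refine ⟨biprod.lift (hS.exact.lift _ h1) (hT.exact.lift _ h2), ?_⟩
  ext <;> simp

lemma sumSC_extClass {S T : ShortComplex C} (hS : S.ShortExact) (hT : T.ShortExact)
    (hX : (sumSC S T).ShortExact) :
    hX.extClass =
      (Ext.mk₀ (biprod.fst : S.X₃ ⊞ T.X₃ ⟶ S.X₃)).comp
        (hS.extClass.comp (Ext.mk₀ (biprod.inl : S.X₁ ⟶ S.X₁ ⊞ T.X₁)) (add_zero 1)) (zero_add 1) +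
      (Ext.mk₀ (biprod.snd : S.X₃ ⊞ T.X₃ ⟶ T.X₃)).comp
        (hT.extClass.comp (Ext.mk₀ (biprod.inr : T.X₁ ⟶ S.X₁ ⊞ T.X₁)) (add_zero 1))
          (zero_add 1) := by
  let m₁ : S ⟶ sumSC S T :=
    { τ₁ := biprod.inl, τ₂ := biprod.inl, τ₃ := biprod.inl }
  let m₂ : T ⟶ sumSC S T :=
    { τ₁ := biprod.inr, τ₂ := biprod.inr, τ₃ := biprod.inr }
  have n₁ : hS.extClass.comp (Ext.mk₀ (biprod.inl : S.X₁ ⟶ S.X₁ ⊞ T.X₁)) (add_zero 1) =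
      (Ext.mk₀ (biprod.inl : S.X₃ ⟶ S.X₃ ⊞ T.X₃)).comp hX.extClass (zero_add 1) :=
    ShortComplex.ShortExact.extClass_naturality hS hX m₁
  have n₂ : hT.extClass.comp (Ext.mk₀ (biprod.inr : T.X₁ ⟶ S.X₁ ⊞ T.X₁)) (add_zero 1) =
      (Ext.mk₀ (biprod.inr : T.X₃ ⟶ S.X₃ ⊞ T.X₃)).comp hX.extClass (zero_add 1) :=
    ShortComplex.ShortExact.extClass_naturality hT hX m₂
  rw [n₁, n₂, Ext.mk₀_comp_mk₀_assoc, Ext.mk₀_comp_mk₀_assoc, ← Ext.add_comp, ← Ext.mk₀_add,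
    biprod.total]
  exact (Ext.mk₀_id_comp _).symm

lemma extClass_eq_zero_of_splitting {S : ShortComplex C} (hS : S.ShortExact)
    (s : S.Splitting) : hS.extClass = 0 := by
  have h := hS.extClass_comp_assoc (γ := Ext.mk₀ s.r) (h := add_zero 1)
  rwa [Ext.mk₀_comp_mk₀, s.f_r, Ext.comp_mk₀_id] at h

lemma EClass_isAddSubfunctor {ξ : Set (ShortComplex C)} (h : IsProperClass ξ) :
    IsAddSubfunctor (EClass ξ) where
  zero_mem Z A := by
    let s : (ShortComplex.mk (biprod.inl : A ⟶ A ⊞ Z) biprod.snd (by simp)).Splitting :=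
      { r := biprod.fst, s := biprod.inr }
    have hm := h.split_mem _ ⟨s⟩
    exact ⟨_, _, _, _, h.shortExact _ hm, hm, extClass_eq_zero_of_splitting _ s⟩
  add_mem Z A := by
    rintro _ ⟨B₁, f₁, g₁, w₁, h₁, m₁, rfl⟩ _ ⟨B₂, f₂, g₂, w₂, h₂, m₂, rfl⟩
    have m := h.sum_mem _ m₁ _ m₂
    have hX := h.shortExact _ m
    have e := sumSC_extClass h₁ h₂ hX
    have mem : hX.extClass ∈ EClass ξ (Z ⊞ Z) (A ⊞ A) := ⟨_, _, _, _, hX, m, rfl⟩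
    have mem2 := h.cobase_change _ _ _ (h.base_change _ _ _ mem Z (biprod.lift (𝟙 Z) (𝟙 Z)))
      A (biprod.desc (𝟙 A) (𝟙 A))
    rw [e] at mem2
    dsimp only at mem2
    simp only [Ext.comp_add, Ext.add_comp, Ext.mk₀_comp_mk₀_assoc, biprod.lift_fst,
      biprod.lift_snd, Ext.mk₀_id_comp, Ext.comp_assoc_of_third_deg_zero, Ext.mk₀_comp_mk₀,
      biprod.inl_desc, biprod.inr_desc, Ext.comp_mk₀_id] at mem2
    exact mem2
  neg_mem Z A δ hδ := by
    have := h.cobase_change _ _ _ hδ A (-𝟙 A)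
    rwa [Ext.mk₀_neg, Ext.comp_neg, Ext.comp_mk₀_id] at this
  push Z A A' a δ hδ := h.cobase_change _ _ _ hδ _ _
  pull Z Z' A c δ hδ := h.base_change _ _ _ hδ _ _

/-- The class of short exact sequences attached to `F`. -/
def classOf (F : ∀ Z A : C, Set (Ext Z A 1)) : Set (ShortComplex C) :=
  {S | ∃ hS : S.ShortExact, hS.extClass ∈ F S.X₃ S.X₁}

lemma EClass_classOf (F : ∀ Z A : C, Set (Ext Z A 1)) : EClass (classOf F) = F := by
  funext Z A
  ext δ
  constructor
  · rintro ⟨B, f, g, w, hS, ⟨_, hm⟩, rfl⟩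
    exact hm
  · intro hδ
    obtain ⟨B, f, g, w, hS, rfl⟩ := exists_shortExact_of_ext δ
    exact ⟨B, f, g, w, hS, ⟨hS, hδ⟩, rfl⟩

lemma classOf_isProperClass {F : ∀ Z A : C, Set (Ext Z A 1)} (hF : IsAddSubfunctor F) :
    IsProperClass (classOf F) where
  shortExact S hS := hS.1
  iso_closed := by
    rintro S ⟨hS, hm⟩ S' ⟨e⟩
    have hS' := ShortComplex.shortExact_of_iso e hS
    refine ⟨hS', ?_⟩
    have nat := ShortComplex.ShortExact.extClass_naturality hS hS' e.hom
    have h1 := hF.pull _ _ _ e.inv.τ₃ _ (hF.push _ _ _ e.hom.τ₁ _ hm)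
    rw [nat, Ext.mk₀_comp_mk₀_assoc, ← ShortComplex.comp_τ₃, e.inv_hom_id, ShortComplex.id_τ₃,
      Ext.mk₀_id_comp] at h1
    exact h1
  split_mem := by
    rintro S ⟨s⟩
    refine ⟨s.shortExact, ?_⟩
    rw [extClass_eq_zero_of_splitting _ s]
    exact hF.zero_mem _ _
  sum_mem := by
    rintro S ⟨hS, mS⟩ T ⟨hT, mT⟩
    refine ⟨sumSC_shortExact hS hT, ?_⟩
    have e := sumSC_extClass hS hT (sumSC_shortExact hS hT)
    exact Set.mem_of_eq_of_mem e (hF.add_mem _ _ _ (hF.pull _ _ _ _ _ (hF.push _ _ _ _ _ mS)) _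
      (hF.pull _ _ _ _ _ (hF.push _ _ _ _ _ mT)))
  base_change Z A δ hδ Z' c := by
    rw [EClass_classOf] at hδ ⊢
    exact hF.pull _ _ _ _ _ hδ
  cobase_change Z A δ hδ A' a := by
    rw [EClass_classOf] at hδ ⊢
    exact hF.push _ _ _ _ _ hδ

lemma subset_of_EClass_eq {ξ₁ ξ₂ : Set (ShortComplex C)} (h₁ : IsProperClass ξ₁)
    (h₂ : IsProperClass ξ₂) (h : EClass ξ₁ = EClass ξ₂) : ξ₁ ⊆ ξ₂ := by
  intro S hS
  have hE := h₁.shortExact _ hS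
  have hm : hE.extClass ∈ EClass ξ₁ S.X₃ S.X₁ := ⟨_, _, _, S.zero, hE, hS, rfl⟩
  rw [h] at hm
  obtain ⟨B, f, g, w, hT, mT, e⟩ := hm
  exact h₂.iso_closed _ mT _ (iso_of_extClass_eq (w := S.zero) hE hT e)

/-- The assignment `ξ ↦ E_ξ` is a bijection between proper classes of short exact
sequences and additive subfunctors of `Ext¹`: it lands in additive subfunctors,
it is injective, and every additive subfunctor arises this way. -/
theorem properClass_equiv_addSubfunctor :
    (∀ ξ : Set (ShortComplex C), IsProperClass ξ → IsAddSubfunctor (EClass ξ)) ∧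
    (∀ ξ₁ ξ₂ : Set (ShortComplex C), IsProperClass ξ₁ → IsProperClass ξ₂ →
      EClass ξ₁ = EClass ξ₂ → ξ₁ = ξ₂) ∧
    (∀ F : ∀ Z A : C, Set (Ext Z A 1), IsAddSubfunctor F →
      ∃ ξ : Set (ShortComplex C), IsProperClass ξ ∧ EClass ξ = F) := by
  exact ⟨fun ξ h => EClass_isAddSubfunctor h,
    fun ξ₁ ξ₂ h₁ h₂ h => Set.Subset.antisymm (subset_of_EClass_eq h₁ h₂ h)
      (subset_of_EClass_eq h₂ h₁ h.symm),
    fun F hF => ⟨classOf F, classOf_isProperClass hF, EClass_classOf F⟩⟩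
end

section
/- Let C be an abelian category and ξ a proper class of short exact sequences. Then ξ is saturated (if in the standard pullback 3×3 diagram obtained from two short exact sequences over a common cokernel, the relevant column and middle row belong to ξ, then the bottom row belongs to ξ) if and only if ξ satisfies the 3×3-lemma property: in any commutative 3×3 diagram of short exact sequences in which all columns and the outer two rows lie in ξ, and either the top two rows or the bottom two rows form a morphism of short exact sequences, the middle row lies in ξ. -/
open CategoryTheory CategoryTheory.Limits CategoryTheory.Abelian

universe w v u

variable {C : Type u} [Category.{v} C] [Abelian C] [HasExt.{w} C]

/-- `ξ` is saturated: in the standard pullback 3×3 diagram obtained from two short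
exact sequences over a common cokernel `Z`, if the relevant column
`A₂ → B₂ → Z` and the middle row `A₁ → M → B₂` belong to `ξ`, then the bottom
row `A₁ → B₁ → Z` belongs to `ξ`. -/
def IsSaturated (ξ : Set (ShortComplex C)) : Prop :=
  ∀ ⦃A₁ B₁ Z A₂ B₂ M : C⦄
    (x₁ : A₁ ⟶ B₁) (y₁ : B₁ ⟶ Z) (x₂ : A₂ ⟶ B₂) (y₂ : B₂ ⟶ Z)
    (m₁ : A₁ ⟶ M) (e₁ : M ⟶ B₂) (m₂ : A₂ ⟶ M) (e₂ : M ⟶ B₁)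
    (w₁ : x₁ ≫ y₁ = 0) (w₂ : x₂ ≫ y₂ = 0) (wr : m₁ ≫ e₁ = 0) (wc : m₂ ≫ e₂ = 0)
    (_c₁ : m₁ ≫ e₂ = x₁) (_c₂ : m₂ ≫ e₁ = x₂) (_c₃ : e₁ ≫ y₂ = e₂ ≫ y₁)
    (_hpb : IsPullback e₂ e₁ y₁ y₂)
    (_h₁ : (ShortComplex.mk x₁ y₁ w₁).ShortExact)
    (_h₂ : (ShortComplex.mk x₂ y₂ w₂).ShortExact)
    (_hr : (ShortComplex.mk m₁ e₁ wr).ShortExact)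
    (_hc : (ShortComplex.mk m₂ e₂ wc).ShortExact),
    ShortComplex.mk x₂ y₂ w₂ ∈ ξ → ShortComplex.mk m₁ e₁ wr ∈ ξ →
    ShortComplex.mk x₁ y₁ w₁ ∈ ξ

/-- `ξ` satisfies the 3×3-lemma property: in any commutative 3×3 diagram of short
exact sequences in which all three columns and the two outer rows belong to `ξ`,
the middle row belongs to `ξ`. -/
def Has3x3Class (ξ : Set (ShortComplex C)) : Prop :=
  ∀ ⦃A B Z D E G H I J : C⦄
    (a : A ⟶ B) (b : B ⟶ Z) (d : D ⟶ E) (e : E ⟶ G) (g : H ⟶ I) (h : I ⟶ J)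
    (i : A ⟶ D) (j : B ⟶ E) (c : Z ⟶ G) (k : D ⟶ H) (l : E ⟶ I) (f : G ⟶ J)
    (w₁ : a ≫ b = 0) (w₂ : d ≫ e = 0) (w₃ : g ≫ h = 0)
    (v₁ : i ≫ k = 0) (v₂ : j ≫ l = 0) (v₃ : c ≫ f = 0)
    (_sq₁ : a ≫ j = i ≫ d) (_sq₂ : b ≫ c = j ≫ e)
    (_sq₃ : d ≫ l = k ≫ g) (_sq₄ : e ≫ f = l ≫ h)
    (_h₁ : (ShortComplex.mk a b w₁).ShortExact)
    (_h₂ : (ShortComplex.mk d e w₂).ShortExact)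
    (_h₃ : (ShortComplex.mk g h w₃).ShortExact)
    (_hc₁ : (ShortComplex.mk i k v₁).ShortExact)
    (_hc₂ : (ShortComplex.mk j l v₂).ShortExact)
    (_hc₃ : (ShortComplex.mk c f v₃).ShortExact),
    ShortComplex.mk a b w₁ ∈ ξ → ShortComplex.mk g h w₃ ∈ ξ →
    ShortComplex.mk i k v₁ ∈ ξ → ShortComplex.mk j l v₂ ∈ ξ →
    ShortComplex.mk c f v₃ ∈ ξ →
    ShortComplex.mk d e w₂ ∈ ξ

open scoped ZeroObject

/-- A short complex is short exact if its first map has the kernel lifting property. -/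
lemma shortExact_of_lift_s8 {A B Z : C} (x : A ⟶ B) (y : B ⟶ Z) (w : x ≫ y = 0)
    [Mono x] [Epi y]
    (h : ∀ {W : C} (k : W ⟶ B), k ≫ y = 0 → ∃ u : W ⟶ A, u ≫ x = k) :
    (ShortComplex.mk x y w).ShortExact := by
  refine ShortComplex.ShortExact.mk' ?_ (by assumption) (by assumption)
  apply ShortComplex.exact_of_f_is_kernel
  exact KernelFork.IsLimit.ofι' x w (fun k hk => ⟨(h k hk).choose, (h k hk).choose_spec⟩)

/-- Pulling back a short exact sequence gives a short exact sequence. -/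
lemma exists_pullback_shortExact {A B Z B' M : C} {x : A ⟶ B} {y : B ⟶ Z} {w : x ≫ y = 0}
    (hS : (ShortComplex.mk x y w).ShortExact) {y' : B' ⟶ Z} {e : M ⟶ B} {e' : M ⟶ B'}
    (hp : IsPullback e e' y y') :
    ∃ (m : A ⟶ M) (w' : m ≫ e' = 0), (ShortComplex.mk m e' w').ShortExact ∧ m ≫ e = x := by
  have hmx : Mono x := hS.mono_f
  have hey : Epi y := hS.epi_g
  have hm : hp.lift x 0 (by simpa using w) ≫ e = x := hp.lift_fst _ _ _
  have hm' : hp.lift x 0 (by simpa using w) ≫ e' = 0 := hp.lift_snd _ _ _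
  refine ⟨hp.lift x 0 (by simpa using w), hm', ?_, hm⟩
  have : Mono (hp.lift x 0 (by simpa using w)) := by
    have : Mono (hp.lift x 0 (by simpa using w) ≫ e) := by rw [hm]; exact hmx
    exact mono_of_mono _ e
  have : Epi e' := by
    have := hp.isoPullback_hom_snd
    rw [← this]
    infer_instance
  apply shortExact_of_lift_s8
  intro W k hk
  obtain ⟨u, hu⟩ := hS.exact.lift' (k ≫ e) (by
    change (k ≫ e) ≫ y = 0
    rw [Category.assoc, hp.w, reassoc_of% hk, zero_comp])
  refine ⟨u, hp.hom_ext ?_ ?_⟩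
  · rw [Category.assoc, hm]; exact hu
  · rw [Category.assoc, hm', hk, comp_zero]

/-- Short exact sequences with the same class are isomorphic. -/
lemma nonempty_iso_of_extClass_eq {A B B' Z : C} {x : A ⟶ B} {y : B ⟶ Z} {w : x ≫ y = 0}
    {x' : A ⟶ B'} {y' : B' ⟶ Z} {w' : x' ≫ y' = 0}
    (hS : (ShortComplex.mk x y w).ShortExact) (hS' : (ShortComplex.mk x' y' w').ShortExact)
    (h : hS.extClass = hS'.extClass) :
    Nonempty (ShortComplex.mk x y w ≅ ShortComplex.mk x' y' w') := by
  have hey : Epi y := hS.epi_g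
  have : Epi (ShortComplex.mk x y w).g := hS.epi_g
  obtain ⟨φ', hφ'⟩ := Ext.contravariant_sequence_exact₁ hS B' (Ext.mk₀ x') (add_zero 1)
    (by rw [h]; exact hS'.extClass_comp)
  obtain ⟨φ, rfl⟩ := (Ext.mk₀_bijective _ _).2 φ'
  rw [Ext.mk₀_comp_mk₀] at hφ'
  have hφ : x ≫ φ = x' := (Ext.mk₀_bijective _ _).1 hφ'
  obtain ⟨t, ht⟩ : ∃ t : Z ⟶ Z, y ≫ t = φ ≫ y' := by
    have h0 : x ≫ (φ ≫ y') = 0 := by rw [reassoc_of% hφ, w']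
    exact ⟨hS.exact.desc (φ ≫ y') h0, hS.exact.g_desc _ _⟩
  let f : ShortComplex.mk x y w ⟶ ShortComplex.mk x' y' w' :=
    { τ₁ := 𝟙 A, τ₂ := φ, τ₃ := t
      comm₁₂ := by simp [hφ]
      comm₂₃ := by simp [ht] }
  have hn := ShortComplex.ShortExact.extClass_naturality hS hS' f
  dsimp only [f] at hn
  have hn2 : hS'.extClass = (Ext.mk₀ t).comp hS'.extClass (zero_add 1) := by
    rw [← hn, ← h]; exact (Ext.comp_mk₀_id _).symm
  have hz : (Ext.mk₀ (t - 𝟙 Z)).comp hS'.extClass (zero_add 1) = 0 := by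
    have e1 : (Ext.mk₀ t).comp hS'.extClass (zero_add 1)
        = (Ext.mk₀ (t - 𝟙 Z)).comp hS'.extClass (zero_add 1) + hS'.extClass := by
      conv_rhs => rw [← Ext.mk₀_id_comp hS'.extClass]
      simp only [Ext.mk₀_id_comp]
      conv_lhs => rw [show t = (t - 𝟙 Z) + 𝟙 Z by abel, Ext.mk₀_add, Ext.add_comp]
      congr 1
      exact Ext.mk₀_id_comp _
    rw [← hn2] at e1
    simpa using e1
  obtain ⟨s', hs'⟩ := Ext.covariant_sequence_exact₃ Z hS' (Ext.mk₀ (t - 𝟙 Z)) (zero_add 1) hz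
  obtain ⟨s, rfl⟩ := (Ext.mk₀_bijective _ _).2 s'
  rw [Ext.mk₀_comp_mk₀] at hs'
  have hs : s ≫ y' = t - 𝟙 Z := (Ext.mk₀_bijective _ _).1 hs'
  let F : ShortComplex.mk x y w ⟶ ShortComplex.mk x' y' w' :=
    { τ₁ := 𝟙 A, τ₂ := φ - y ≫ s, τ₃ := 𝟙 Z
      comm₁₂ := by simp [hφ, reassoc_of% w]
      comm₂₃ := by simp [hs, ht] }
  have : IsIso F.τ₁ := by dsimp [F]; infer_instance
  have : IsIso F.τ₃ := by dsimp [F]; infer_instance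
  have : IsIso F.τ₂ := ShortComplex.isIso₂_of_shortExact_of_isIso₁₃ F hS hS'
  exact ⟨ShortComplex.isoMk (asIso F.τ₁) (asIso F.τ₂) (asIso F.τ₃) F.comm₁₂ F.comm₂₃⟩

lemma mem_EClass_iff {ξ : Set (ShortComplex C)} (hξ : IsProperClass ξ)
    {A B Z : C} {x : A ⟶ B} {y : B ⟶ Z} {w : x ≫ y = 0}
    (hS : (ShortComplex.mk x y w).ShortExact) :
    hS.extClass ∈ EClass ξ Z A ↔ ShortComplex.mk x y w ∈ ξ := by
  constructor
  · rintro ⟨B', f, g, w', hS', hm, he⟩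
    exact hξ.iso_closed _ hm _ (nonempty_iso_of_extClass_eq hS' hS he)
  · intro h
    exact ⟨B, x, y, w, hS, h, rfl⟩

/-- Naturality of the extension class, for unbundled morphisms. -/
lemma extClass_nat {A B Z A' B' Z' : C} {x : A ⟶ B} {y : B ⟶ Z} {w : x ≫ y = 0}
    {x' : A' ⟶ B'} {y' : B' ⟶ Z'} {w' : x' ≫ y' = 0}
    (hS : (ShortComplex.mk x y w).ShortExact) (hS' : (ShortComplex.mk x' y' w').ShortExact)
    (p : A ⟶ A') (q : B ⟶ B') (r : Z ⟶ Z') (h₁ : p ≫ x' = x ≫ q) (h₂ : q ≫ y' = y ≫ r) :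
    Ext.comp (X := Z) (Y := A) hS.extClass (Ext.mk₀ p) (add_zero 1) =
      (Ext.mk₀ r).comp (Y := Z') (Z := A') hS'.extClass (zero_add 1) :=
  ShortComplex.ShortExact.extClass_naturality hS hS'
    { τ₁ := p, τ₂ := q, τ₃ := r, comm₁₂ := h₁, comm₂₃ := h₂ }

/-- The class of a pulled back sequence. -/
lemma extClass_pull {A B Z B' M : C} {x : A ⟶ B} {y : B ⟶ Z} {w : x ≫ y = 0}
    (hS : (ShortComplex.mk x y w).ShortExact) {y' : B' ⟶ Z} {e : M ⟶ B} {e' : M ⟶ B'}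
    {m : A ⟶ M} {w' : m ≫ e' = 0} (hS' : (ShortComplex.mk m e' w').ShortExact)
    (hm : m ≫ e = x) (hc : e ≫ y = e' ≫ y') :
    hS'.extClass = (Ext.mk₀ y').comp (Y := Z) (Z := A) hS.extClass (zero_add 1) := by
  rw [← extClass_nat hS' hS (𝟙 A) e y' (by simp [hm]) hc]
  exact (Ext.comp_mk₀_id _).symm

/-- Membership in a proper class is stable under pullback. -/
lemma pull_mem {ξ : Set (ShortComplex C)} (hξ : IsProperClass ξ)
    {A B Z B' M : C} {x : A ⟶ B} {y : B ⟶ Z} {w : x ≫ y = 0}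
    (hS : (ShortComplex.mk x y w).ShortExact) {y' : B' ⟶ Z} {e : M ⟶ B} {e' : M ⟶ B'}
    {m : A ⟶ M} {w' : m ≫ e' = 0} (hS' : (ShortComplex.mk m e' w').ShortExact)
    (hm : m ≫ e = x) (hc : e ≫ y = e' ≫ y') (h : ShortComplex.mk x y w ∈ ξ) :
    ShortComplex.mk m e' w' ∈ ξ := by
  rw [← mem_EClass_iff hξ hS', extClass_pull hS hS' hm hc]
  exact hξ.base_change _ _ _ ((mem_EClass_iff hξ hS).2 h) _ _

/-- Saturation in terms of extension classes. -/
lemma saturated_ext {ξ : Set (ShortComplex C)} (hξ : IsProperClass ξ) (hsat : IsSaturated ξ)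
    {A₁ B₁ Z A₂ B₂ : C} {x₁ : A₁ ⟶ B₁} {y₁ : B₁ ⟶ Z} {w₁ : x₁ ≫ y₁ = 0}
    {x₂ : A₂ ⟶ B₂} {y₂ : B₂ ⟶ Z} {w₂ : x₂ ≫ y₂ = 0}
    (h₁ : (ShortComplex.mk x₁ y₁ w₁).ShortExact) (h₂ : (ShortComplex.mk x₂ y₂ w₂).ShortExact)
    (hm₂ : ShortComplex.mk x₂ y₂ w₂ ∈ ξ)
    (h : (Ext.mk₀ y₂).comp (Y := Z) (Z := A₁) h₁.extClass (zero_add 1) ∈ EClass ξ B₂ A₁) :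
    ShortComplex.mk x₁ y₁ w₁ ∈ ξ := by
  have hp := IsPullback.of_hasPullback y₁ y₂
  obtain ⟨m₁, wr, hr, c₁⟩ := exists_pullback_shortExact h₁ hp
  obtain ⟨m₂, wc, hc, c₂⟩ := exists_pullback_shortExact h₂ hp.flip
  refine hsat x₁ y₁ x₂ y₂ m₁ _ m₂ _ w₁ w₂ wr wc c₁ c₂ hp.w.symm hp h₁ h₂ hr hc hm₂ ?_
  rw [← mem_EClass_iff hξ hr, extClass_pull h₁ hr c₁ hp.w]
  exact h

lemma three_by_three_of_saturated {ξ : Set (ShortComplex C)} (hξ : IsProperClass ξ)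
    (hsat : IsSaturated ξ) : Has3x3Class ξ := by
  intro A B Z D E G H I J a b d e g h i j c k l f w₁ w₂ w₃ v₁ v₂ v₃ sq₁ sq₂ sq₃ sq₄
    h₁ h₂ h₃ hc₁ hc₂ hc₃ m₁ m₃ n₁ n₂ n₃
  -- `P = I ×_J G`, with projection `p : P ⟶ G`
  have hP := IsPullback.of_hasPullback h f
  obtain ⟨s, ws, hs, cs⟩ := exists_pullback_shortExact h₃ hP
  have hsm := pull_mem hξ h₃ hs cs hP.w m₃
  refine saturated_ext hξ hsat h₂ hs hsm ?_
  -- the pullback of the middle row along `p`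
  have hT := IsPullback.of_hasPullback e (pullback.snd h f)
  obtain ⟨t, wt, ht, ct⟩ := exists_pullback_shortExact h₂ hT
  rw [← extClass_pull h₂ ht ct hT.w, mem_EClass_iff hξ]
  -- `N = E ×_I P`
  have hN := IsPullback.of_hasPullback l (pullback.fst h f)
  obtain ⟨r, wr, hr, cr⟩ := exists_pullback_shortExact hc₂ hN
  have hrm := pull_mem hξ hc₂ hr cr hN.w n₂
  refine saturated_ext hξ hsat ht hr hrm ?_
  rw [extClass_pull h₂ ht ct hT.w, Ext.mk₀_comp_mk₀_assoc]
  have hmc : Mono c := hc₃.mono_f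
  have hmc' : Mono (ShortComplex.mk c f v₃).f := hc₃.mono_f
  obtain ⟨z, hz⟩ := hc₃.exact.lift' (pullback.snd l (pullback.fst h f) ≫ pullback.snd h f
      - pullback.fst l (pullback.fst h f) ≫ e) (by
    change (pullback.snd l (pullback.fst h f) ≫ pullback.snd h f
      - pullback.fst l (pullback.fst h f) ≫ e) ≫ f = 0
    rw [Preadditive.sub_comp, Category.assoc, Category.assoc, ← hP.w, sq₄, ← hN.w_assoc, sub_self])
  have hz' : z ≫ c = pullback.snd l (pullback.fst h f) ≫ pullback.snd h f
      - pullback.fst l (pullback.fst h f) ≫ e := hz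
  rw [show pullback.snd l (pullback.fst h f) ≫ pullback.snd h f
      = z ≫ c + pullback.fst l (pullback.fst h f) ≫ e by rw [hz']; abel,
    Ext.mk₀_add, Ext.add_comp, ← Ext.mk₀_comp_mk₀_assoc, ← Ext.mk₀_comp_mk₀_assoc]
  have e0 : (Ext.mk₀ e).comp (Y := G) (Z := D) h₂.extClass (zero_add 1) = 0 := h₂.comp_extClass
  rw [e0, Ext.comp_zero, add_zero, ← extClass_nat h₁ h₂ i j c sq₁.symm sq₂.symm]
  exact hξ.base_change _ _ _
    (hξ.cobase_change _ _ _ ((mem_EClass_iff hξ h₁).2 m₁) _ _) _ _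

lemma saturated_of_three_by_three {ξ : Set (ShortComplex C)} (hξ : IsProperClass ξ)
    (h33 : Has3x3Class ξ) : IsSaturated ξ := by
  intro A₁ B₁ Z A₂ B₂ M x₁ y₁ x₂ y₂ m₁ e₁ m₂ e₂ w₁ w₂ wr wc c₁ c₂ c₃ hpb h₁ h₂ hr hc n₂ nr
  have hx₁ : Mono x₁ := h₁.mono_f
  have hx₂ : Mono x₂ := h₂.mono_f
  have hx₁' : Mono (ShortComplex.mk x₁ y₁ w₁).f := h₁.mono_f
  have hx₂' : Mono (ShortComplex.mk x₂ y₂ w₂).f := h₂.mono_f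
  have hy₂ : Epi y₂ := h₂.epi_g
  have he₁ : Epi e₁ := hr.epi_g
  have hK0 : biprod.desc m₁ m₂ ≫ e₁ ≫ y₂ = 0 := by
    ext
    · simp [reassoc_of% wr]
    · simp [reassoc_of% c₂, w₂]
  have hK1 : biprod.desc m₁ m₂ ≫ e₁ = biprod.snd ≫ x₂ := by
    ext <;> simp [wr, c₂]
  have hK2 : biprod.desc m₁ m₂ ≫ e₂ = biprod.fst ≫ x₁ := by
    ext <;> simp [wc, c₁]
  have hmono : Mono (biprod.desc m₁ m₂) := by
    refine Preadditive.mono_of_cancel_zero _ (fun s hs => ?_)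
    apply biprod.hom_ext
    · rw [← cancel_mono x₁, Category.assoc, ← hK2, reassoc_of% hs]; simp
    · rw [← cancel_mono x₂, Category.assoc, ← hK1, reassoc_of% hs]; simp
  have hS : (ShortComplex.mk (biprod.desc m₁ m₂) (e₁ ≫ y₂) hK0).ShortExact := by
    apply shortExact_of_lift_s8
    intro W k hk
    obtain ⟨u, hu⟩ := h₂.exact.lift' (k ≫ e₁) (by simpa using hk)
    obtain ⟨v, hv⟩ := h₁.exact.lift' (k ≫ e₂) (by simpa [← c₃] using hk)
    refine ⟨biprod.lift v u, hpb.hom_ext ?_ ?_⟩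
    · rw [Category.assoc, hK2, biprod.lift_fst_assoc]; exact hv
    · rw [Category.assoc, hK1, biprod.lift_snd_assoc]; exact hu
  have z1 : (ShortComplex.mk (𝟙 A₁) (0 : A₁ ⟶ (0 : C)) (by simp)) ∈ ξ :=
    hξ.split_mem _ ⟨{ r := 𝟙 _, s := 0, f_r := by simp, s_g := by ext, id := by simp }⟩
  have z2 : (ShortComplex.mk (0 : (0 : C) ⟶ Z) (𝟙 Z) (by simp)) ∈ ξ :=
    hξ.split_mem _ ⟨{ r := 0, s := 𝟙 _, f_r := by ext, s_g := by simp, id := by simp }⟩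
  have z3 : (ShortComplex.mk (biprod.inl : A₁ ⟶ A₁ ⊞ A₂) biprod.snd (by simp)) ∈ ξ :=
    hξ.split_mem _ ⟨{ r := biprod.fst, s := biprod.inr, f_r := by simp, s_g := by simp,
                      id := by simp [biprod.total] }⟩
  have hSm := h33 (𝟙 A₁) (0 : A₁ ⟶ (0 : C)) (biprod.desc m₁ m₂) (e₁ ≫ y₂) x₂ y₂
    biprod.inl m₁ (0 : (0 : C) ⟶ Z) biprod.snd e₁ (𝟙 Z)
    (by simp) hK0 w₂ (by simp) wr (by simp) (by simp) (by simp [reassoc_of% wr]) hK1 (by simp)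
    (hξ.shortExact _ z1) hS h₂ (hξ.shortExact _ z3) hr (hξ.shortExact _ z2) z1 n₂ z3 nr z2
  rw [← mem_EClass_iff hξ h₁]
  have hn := extClass_nat hS h₁ biprod.fst e₂ (𝟙 Z) hK2.symm (by simp [c₃])
  have hid : (Ext.mk₀ (𝟙 Z)).comp (Y := Z) (Z := A₁) h₁.extClass (zero_add 1) = h₁.extClass :=
    Ext.mk₀_id_comp _
  rw [← hid, ← hn]
  exact hξ.cobase_change _ _ _ ((mem_EClass_iff hξ hS).2 hSm) _ _

/-- A proper class `ξ` is saturated if and only if it satisfies the 3×3-lemma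
property. -/
theorem saturated_iff_three_by_three
    (ξ : Set (ShortComplex C)) (hξ : IsProperClass ξ) :
    IsSaturated ξ ↔ Has3x3Class ξ := by
  exact ⟨three_by_three_of_saturated hξ, saturated_of_three_by_three hξ⟩
end

section
/- Let C be an abelian category and F an additive subfunctor of Ext^1 such that F-deflations are closed under composition. Then for any F-exact short exact sequence 0 → A → B → C → 0 and any object X, the induced sequence of abelian groups F(X,A) → F(X,B) → F(X,C) (maps given by pushforward of extension classes) is exact at F(X,B). -/
open CategoryTheory CategoryTheory.Limits CategoryTheory.Abelian

universe w v u

variable {C : Type u} [Category.{v} C] [Abelian C] [HasExt.{w} C]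

open DerivedCategory in
theorem aux_efface {X A : C} (x : Ext X A 1) :
    ∃ (P : C) (p : P ⟶ X) (_ : Epi p), (Ext.mk₀ p).comp x (zero_add 1) = 0 := by
  let := HasDerivedCategory.standard C
  let e : ((singleFunctor C 0).obj A)⟦(1 : ℤ)⟧ ≅ (singleFunctor C (-1)).obj A :=
    ((singleFunctors C).shiftIso 1 (-1) 0 (by simp)).app A
  obtain ⟨K, s, hs, g, hg⟩ := right_fac
    (X := (HomologicalComplex.single C (ComplexShape.up ℤ) 0).obj X)
    (Y := (HomologicalComplex.single C (ComplexShape.up ℤ) (-1)).obj A)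
    (x.hom ≫ e.hom)
  have hq : QuasiIso s := (isIso_Q_map_iff_quasiIso C s).1 hs
  let i : (HomologicalComplex.single C (ComplexShape.up ℤ) 0).obj (K.cycles 0) ⟶ K :=
    HomologicalComplex.mkHomFromSingle (K.iCycles 0) (by simp)
  let p : K.cycles 0 ⟶ X := HomologicalComplex.cyclesMap s 0 ≫
    (HomologicalComplex.singleObjCyclesSelfIso _ 0 X).hom
  have hp : Epi p := by
    have h1 : Epi (HomologicalComplex.cyclesMap s 0 ≫ HomologicalComplex.homologyπ _ 0) := by
      rw [← HomologicalComplex.homologyπ_naturality]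
      infer_instance
    rw [← HomologicalComplex.singleObjHomologySelfIso_hom_singleObjHomologySelfIso_inv,
      ← Category.assoc] at h1
    have h2 : p = ((HomologicalComplex.cyclesMap s 0 ≫
      (HomologicalComplex.singleObjCyclesSelfIso _ 0 X).hom) ≫
      (HomologicalComplex.singleObjHomologySelfIso (ComplexShape.up ℤ) 0 X).inv) ≫
      (HomologicalComplex.singleObjHomologySelfIso (ComplexShape.up ℤ) 0 X).hom := by simp [p]
    rw [h2]
    exact epi_comp _ _
  have hi : i ≫ s = (HomologicalComplex.single C (ComplexShape.up ℤ) 0).map p := by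
    apply HomologicalComplex.from_single_hom_ext
    simp [i, p, HomologicalComplex.single_map_f_self,
      HomologicalComplex.singleObjCyclesSelfIso_hom]
  have hig : i ≫ g = 0 := by
    apply HomologicalComplex.from_single_hom_ext
    exact (HomologicalComplex.isZero_single_obj_X _ _ _ _ (by decide)).eq_of_tgt _ _
  refine ⟨_, p, hp, ?_⟩
  ext
  rw [← Ext.singleFunctor_map_comp_hom, Ext.zero_hom, ← cancel_mono e.hom]
  rw [Category.assoc]
  refine (congrArg (fun t => (singleFunctor C 0).map p ≫ t) hg).trans ?_
  change Q.map ((HomologicalComplex.single C (ComplexShape.up ℤ) 0).map p) ≫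
    inv (Q.map s) ≫ Q.map g = _
  rw [← hi, Functor.map_comp, Category.assoc, IsIso.hom_inv_id_assoc, ← Functor.map_comp, hig]
  rw [Functor.map_zero, zero_comp]
  rfl

/-- The pushout of a short exact sequence along a morphism `b` out of its first object. -/
theorem aux_pushout {A M X B : C} (f : A ⟶ M) (g : M ⟶ X) (w : f ≫ g = 0)
    (hS : (ShortComplex.mk f g w).ShortExact) (b : A ⟶ B) :
    ∃ (E : C) (i : B ⟶ E) (c : M ⟶ E) (q : E ⟶ X) (_ : IsPushout b f i c)
      (h1 : i ≫ q = 0) (_ : c ≫ q = g) (hT : (ShortComplex.mk i q h1).ShortExact),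
      hT.extClass = hS.extClass.comp (Ext.mk₀ b) (add_zero 1) := by
  have hf : Mono f := hS.mono_f
  have hg : Epi g := hS.epi_g
  have sq := IsPushout.of_hasPushout b f
  have hi : Mono (pushout.inl b f) := inferInstance
  generalize pushout.inl b f = i at *
  generalize pushout.inr b f = c at *
  generalize pushout b f = E at *
  obtain ⟨q, h1, h2⟩ := sq.exists_desc (0 : B ⟶ X) g (by rw [w, comp_zero])
  have hq : Epi q := epi_of_epi_fac h2
  have hT : (ShortComplex.mk i q h1).ShortExact := by
    have key : ∀ {W : C} (k : E ⟶ W), i ≫ k = 0 → ∃ l : X ⟶ W, q ≫ l = k := by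
      intro W k hk
      have h3 : f ≫ c ≫ k = 0 := by
        rw [← Category.assoc, ← sq.w, Category.assoc, hk, comp_zero]
      have hl : g ≫ hS.exact.desc (c ≫ k) h3 = c ≫ k := hS.exact.g_desc (c ≫ k) h3
      refine ⟨hS.exact.desc (c ≫ k) h3, ?_⟩
      apply sq.hom_ext
      · rw [reassoc_of% h1, zero_comp, hk]
      · rw [reassoc_of% h2, hl]
    have hex : (ShortComplex.mk i q h1).Exact := by
      apply ShortComplex.exact_of_g_is_cokernel
      refine CokernelCofork.IsColimit.ofπ _ _
        (fun k hk => (key k hk).choose) (fun k hk => (key k hk).choose_spec) ?_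
      intro W k hk m hm
      rw [← cancel_epi q]
      exact hm.trans (key k hk).choose_spec.symm
    exact { exact := hex, mono_f := hi, epi_g := hq }
  refine ⟨E, i, c, q, sq, h1, h2, hT, ?_⟩
  have := ShortComplex.ShortExact.extClass_naturality hS hT
    { τ₁ := b, τ₂ := c, τ₃ := 𝟙 X, comm₁₂ := sq.w, comm₂₃ := by simp [h2] }
  simpa using this.symm

theorem aux_realize {X A : C} (x : Ext X A 1) :
    ∃ (E : C) (f : A ⟶ E) (g : E ⟶ X) (w : f ≫ g = 0)
      (hS : (ShortComplex.mk f g w).ShortExact), hS.extClass = x := by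
  obtain ⟨P, p, hp, hx⟩ := aux_efface x
  have hS : (ShortComplex.mk (kernel.ι p) p (kernel.condition p)).ShortExact :=
    { exact := ShortComplex.exact_kernel p }
  obtain ⟨k, hk⟩ := Ext.contravariant_sequence_exact₃ hS A x hx (add_zero 1)
  obtain ⟨k, rfl⟩ := (Ext.mk₀_bijective _ _).2 k
  obtain ⟨E, i, c, q, -, h1, -, hT, h⟩ := aux_pushout _ _ _ hS k
  exact ⟨E, i, q, h1, hT, h.trans hk⟩

/-- If the `F`-deflations are closed under composition, then for every `F`-exact
short exact sequence `A → B → Z` and every object `X`, the sequence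
`F(X,A) → F(X,B) → F(X,Z)` is exact at `F(X,B)`. -/
theorem FSequence_exact_at_middle
    (F : ∀ Z A : C, Set (Ext Z A 1)) (hF : IsAddSubfunctor F)
    (hclosed : DeflationsClosed F)
    (S : ShortComplex C) (hS : S.ShortExact) (hmem : hS.extClass ∈ F S.X₃ S.X₁)
    (X : C) (δ : Ext X S.X₂ 1) (hδ : δ ∈ F X S.X₂) :
    δ.comp (Ext.mk₀ S.g) (add_zero 1) = 0 ↔
      ∃ μ ∈ F X S.X₁, μ.comp (Ext.mk₀ S.f) (add_zero 1) = δ := by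
  rcases S with @⟨A, B, Z, f, g, w⟩
  dsimp only at *
  have hfm : Mono f := hS.mono_f
  constructor
  · intro h0
    obtain ⟨μ, hμ⟩ := Ext.covariant_sequence_exact₂ X hS δ h0
    refine ⟨μ, ?_, hμ⟩
    obtain ⟨M, j, p, wM, hM, rfl⟩ := aux_realize μ
    have hjm : Mono j := hM.mono_f
    obtain ⟨E, i, c, q, sq, h1, h2, hE, hcl⟩ := aux_pushout j p wM hM f
    -- `E ⟶ X` is an `F`-deflation
    have hq : IsFDeflation F q := ⟨B, i, h1, hE, by rw [hcl]; exact hμ ▸ hδ⟩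
    -- `B ⊞ M ⟶ E` is an `F`-deflation
    obtain ⟨h, hh1, hh2⟩ := sq.exists_desc g (0 : M ⟶ Z) (by rw [w, comp_zero])
    have wD : biprod.lift f (-j) ≫ biprod.desc i c = 0 := by simp [sq.w]
    have hD : (ShortComplex.mk _ _ wD).ShortExact :=
      { exact := sq.exact_shortComplex
        mono_f := mono_of_mono_fac (biprod.lift_fst f (-j))
        epi_g := sq.epi_shortComplex_g }
    have hd : IsFDeflation F (biprod.desc i c) := by
      refine ⟨A, _, wD, hD, ?_⟩
      have := ShortComplex.ShortExact.extClass_naturality hD hS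
        { τ₁ := 𝟙 A, τ₂ := biprod.fst, τ₃ := h
          comm₁₂ := by simp
          comm₂₃ := by
            dsimp only
            apply biprod.hom_ext' <;> simp [hh1, hh2] }
      have e : hD.extClass = (Ext.mk₀ h).comp hS.extClass (zero_add 1) := by
        simpa using this
      rw [e]
      exact hF.pull _ _ _ _ _ hmem
    obtain ⟨K, a, wK, hK, hKF⟩ := hclosed _ _ hd hq
    have hsnd : biprod.desc i c ≫ q = biprod.snd ≫ p := by
      apply biprod.hom_ext' <;> simp [h1, h2]
    have hk : (a ≫ biprod.snd) ≫ p = 0 := by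
      rw [Category.assoc, ← hsnd, wK]
    have hl : hM.exact.lift (a ≫ biprod.snd) hk ≫ j = a ≫ biprod.snd :=
      hM.exact.lift_f _ hk
    have := ShortComplex.ShortExact.extClass_naturality hK hM
      { τ₁ := hM.exact.lift (a ≫ biprod.snd) hk, τ₂ := biprod.snd, τ₃ := 𝟙 X
        comm₁₂ := hl
        comm₂₃ := by
          dsimp only
          rw [Category.comp_id, hsnd] }
    have e : hM.extClass = hK.extClass.comp
        (Ext.mk₀ (hM.exact.lift (a ≫ biprod.snd) hk)) (add_zero 1) := by
      simpa using this.symm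
    rw [e]
    exact hF.push _ _ _ _ _ hKF
  · rintro ⟨μ, -, rfl⟩
    simp [w]
end
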